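/- arXiv:1906.04134 — 2 statements merged into one kernel-verified Lean document; each statement's English description precedes it below -/
import Mathlib

section
/- Let Σ be a pure (d-1)-dimensional vertex-decomposable simplicial complex and let σ ∈ Σ be a face with |σ| = i. Then the link lk(σ,Σ) is a pure (d-i-1)-dimensional vertex-decomposable simplicial complex. -/
/-- An abstract simplicial complex on vertex type `V`: a collection of finite
subsets (faces) containing the empty set and closed under taking subsets. -/
def IsComplex {V : Type*} (K : Set (Finset V)) : Prop :=
  ∅ ∈ K ∧ ∀ σ ∈ K, ∀ τ ⊆ σ, τ ∈ K

/-- The link `lk(σ,Σ) = {τ ∈ Σ : τ ∩ σ = ∅ ∧ τ ∪ σ ∈ Σ}`. -/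
def linkC {V : Type*} [DecidableEq V] (K : Set (Finset V)) (σ : Finset V) :
    Set (Finset V) :=
  {τ ∈ K | τ ∩ σ = ∅ ∧ τ ∪ σ ∈ K}

/-- The deletion `Σ \ {v}`: all faces of `Σ` not containing `v`. -/
def delV {V : Type*} (K : Set (Finset V)) (v : V) : Set (Finset V) :=
  {σ ∈ K | v ∉ σ}

/-- `σ` is a facet (maximal face) of `K`. -/
def IsFacet {V : Type*} (K : Set (Finset V)) (σ : Finset V) : Prop :=
  σ ∈ K ∧ ∀ τ ∈ K, σ ⊆ τ → σ = τ

/-- `K` is pure `(d-1)`-dimensional: every facet has exactly `d` elements. -/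
def PureD {V : Type*} (K : Set (Finset V)) (d : ℕ) : Prop :=
  ∀ σ, IsFacet K σ → σ.card = d

/-- `K` is the `(d-1)`-simplex: the family of all subsets of a fixed
`d`-element set (for `d = 0` this is the complex `{∅}`). -/
def IsSimplexOn {V : Type*} (K : Set (Finset V)) (d : ℕ) : Prop :=
  ∃ S : Finset V, S.card = d ∧ K = {σ | σ ⊆ S}

/-- Vertex-decomposability for a pure `(d-1)`-dimensional complex (facets of
cardinality `d`): either a `(d-1)`-simplex, or there is a shedding vertex `v`
with `K \ {v}` vertex-decomposable of the same dimension and `lk({v},K)`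
vertex-decomposable of dimension one less. -/
inductive VD {V : Type*} [DecidableEq V] : ℕ → Set (Finset V) → Prop
  | simplex (d : ℕ) (K : Set (Finset V)) (h : IsSimplexOn K d) : VD d K
  | shed (d : ℕ) (K : Set (Finset V)) (v : V) (hK : IsComplex K)
      (hp : PureD K d) (hv : ({v} : Finset V) ∈ K)
      (hdel : VD d (delV K v)) (hlink : VD (d - 1) (linkC K {v})) : VD d K

theorem linkC_isComplex {V : Type*} [DecidableEq V] {K : Set (Finset V)} (hK : IsComplex K)
    {σ : Finset V} (hσ : σ ∈ K) : IsComplex (linkC K σ) := by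
  refine ⟨⟨hK.1, by simp, by simpa using hσ⟩, ?_⟩
  rintro τ ⟨h1, h2, h3⟩ ρ hρ
  refine ⟨hK.2 _ h1 _ hρ, ?_, hK.2 _ h3 _ (Finset.union_subset_union_left hρ)⟩
  rw [← Finset.subset_empty, ← h2]
  exact Finset.inter_subset_inter_right hρ

theorem linkC_pureD {V : Type*} [DecidableEq V] {K : Set (Finset V)} (hK : IsComplex K)
    {d : ℕ} (hp : PureD K d) (σ : Finset V) : PureD (linkC K σ) (d - σ.card) := by
  rintro τ ⟨⟨h1, h2, h3⟩, hmax⟩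
  have hdis : Disjoint τ σ := Finset.disjoint_iff_inter_eq_empty.2 h2
  have hf : IsFacet K (τ ∪ σ) := by
    refine ⟨h3, fun ρ hρ hsub => ?_⟩
    have hσρ : σ ⊆ ρ := Finset.subset_union_right.trans hsub
    have hu : ρ \ σ ∪ σ = ρ := Finset.sdiff_union_of_subset hσρ
    have := hmax (ρ \ σ) ⟨hK.2 _ hρ _ Finset.sdiff_subset, by simp, by rw [hu]; exact hρ⟩
      (Finset.subset_sdiff.2 ⟨Finset.subset_union_left.trans hsub, hdis⟩)
    rw [this, hu]
  have := hp _ hf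
  rw [Finset.card_union_of_disjoint hdis] at this
  omega

theorem mem_linkC_iff {V : Type*} [DecidableEq V] {K : Set (Finset V)} (hK : IsComplex K)
    {σ τ : Finset V} : τ ∈ linkC K σ ↔ Disjoint τ σ ∧ τ ∪ σ ∈ K := by
  rw [Finset.disjoint_iff_inter_eq_empty]
  exact ⟨fun h => h.2, fun h => ⟨hK.2 _ h.2 _ Finset.subset_union_left, h⟩⟩

theorem linkC_linkC {V : Type*} [DecidableEq V] {K : Set (Finset V)} (hK : IsComplex K)
    {σ ρ : Finset V} (h : Disjoint σ ρ) (hm : σ ∪ ρ ∈ K) :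
    linkC (linkC K σ) ρ = linkC K (σ ∪ ρ) := by
  have hσ : σ ∈ K := hK.2 _ hm _ Finset.subset_union_left
  ext τ
  rw [mem_linkC_iff (linkC_isComplex hK hσ), mem_linkC_iff hK, mem_linkC_iff hK,
    Finset.disjoint_union_left, Finset.disjoint_union_right, Finset.union_assoc,
    Finset.union_comm ρ σ]
  have := h.symm
  tauto

theorem vd_linkC {V : Type*} [DecidableEq V] {d : ℕ} {K : Set (Finset V)}
    (hvd : VD d K) : ∀ σ ∈ K, VD (d - σ.card) (linkC K σ) := by
  induction hvd with
  | simplex d K h =>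
    obtain ⟨S, hS, rfl⟩ := h
    intro σ hσ
    have hσ' : σ ⊆ S := hσ
    refine VD.simplex _ _ ⟨S \ σ, by rw [Finset.card_sdiff_of_subset hσ', hS], ?_⟩
    ext τ
    simp only [linkC, Set.mem_setOf_eq, Finset.subset_sdiff, Finset.union_subset_iff,
      Finset.disjoint_iff_inter_eq_empty]
    tauto
  | shed d K v hK hp hv hdel hlink ihd ihl =>
    intro σ hσ
    by_cases hvσ : v ∈ σ
    · have hu : {v} ∪ σ.erase v = σ := by
        rw [← Finset.insert_eq, Finset.insert_erase hvσ]
      have hd : Disjoint {v} (σ.erase v) := by simp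
      have h := ihl (σ.erase v)
        ((mem_linkC_iff hK).2 ⟨hd.symm, by rw [Finset.union_comm, hu]; exact hσ⟩)
      rw [linkC_linkC hK hd (by rw [hu]; exact hσ), hu, Finset.card_erase_of_mem hvσ] at h
      have := Finset.card_pos.2 ⟨v, hvσ⟩
      rwa [show d - 1 - (σ.card - 1) = d - σ.card by omega] at h
    · have hd : Disjoint {v} σ := by simpa using hvσ
      have h := ihd σ ⟨hσ, hvσ⟩
      have e : linkC (delV K v) σ = delV (linkC K σ) v := by
        ext τ
        simp only [linkC, delV, Set.mem_setOf_eq, Finset.mem_union]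
        tauto
      rw [e] at h
      by_cases hm : {v} ∪ σ ∈ K
      · refine VD.shed _ _ v (linkC_isComplex hK hσ) (linkC_pureD hK hp σ)
          ((mem_linkC_iff hK).2 ⟨hd, hm⟩) h ?_
        have h2 := ihl σ ((mem_linkC_iff hK).2 ⟨hd.symm, by rwa [Finset.union_comm]⟩)
        rw [linkC_linkC hK hd hm] at h2
        rw [linkC_linkC hK hd.symm (by rwa [Finset.union_comm]), Finset.union_comm,
          Nat.sub_right_comm]
        exact h2
      · have e2 : delV (linkC K σ) v = linkC K σ := by
          ext τ
          refine ⟨fun h => h.1, fun h => ⟨h, fun hvτ => hm ?_⟩⟩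
          exact hK.2 _ h.2.2 _
            (Finset.union_subset_union_left (Finset.singleton_subset_iff.2 hvτ))
        rwa [e2] at h

/-- The link of a face with `i` elements in a pure `(d-1)`-dimensional
vertex-decomposable complex is a pure `(d-i-1)`-dimensional
vertex-decomposable complex. -/
theorem link_vertexDecomposable {V : Type*} [DecidableEq V]
    (K : Set (Finset V)) (hK : IsComplex K) (d : ℕ) (hp : PureD K d)
    (hvd : VD d K) (σ : Finset V) (hσ : σ ∈ K) :
    IsComplex (linkC K σ) ∧ PureD (linkC K σ) (d - σ.card) ∧
      VD (d - σ.card) (linkC K σ) := by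
  exact ⟨linkC_isComplex hK hσ, linkC_pureD hK hp σ, vd_linkC hvd σ hσ⟩
end

section
/- Let Σ be a pure (d-1)-dimensional vertex-decomposable simplicial complex with shedding vertex v, and let σ ∈ Σ be a nonempty face with v ∉ σ and σ ∪ {v} ∈ Σ. Then v is a shedding vertex of the link lk(σ,Σ); that is, lk(σ,Σ) \ {v} is vertex-decomposable of the same dimension as lk(σ,Σ), and lk({v}, lk(σ,Σ)) is vertex-decomposable of dimension one less. -/
theorem linkC_comm_aux {V : Type*} [DecidableEq V] (K : Set (Finset V)) (hK : IsComplex K)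
    (σ ρ : Finset V) (h : σ ∩ ρ = ∅) :
    linkC (linkC K σ) ρ = linkC K (ρ ∪ σ) := by
  ext τ
  simp only [linkC, Set.mem_ofPred_eq]
  constructor
  · rintro ⟨⟨h1, h2, h3⟩, h4, h5, h6, h7⟩
    refine ⟨h1, ?_, ?_⟩
    · rw [Finset.inter_union_distrib_left, h2, h4]; simp
    · rwa [← Finset.union_assoc]
  · rintro ⟨h1, h2, h3⟩
    rw [Finset.inter_union_distrib_left, Finset.union_eq_empty] at h2
    rw [← Finset.union_assoc] at h3
    refine ⟨⟨h1, h2.2, hK.2 _ h3 _ ?_⟩, h2.1, hK.2 _ h3 _ ?_, ?_, h3⟩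
    · intro x; simp only [Finset.mem_union]; tauto
    · intro x; simp only [Finset.mem_union]; tauto
    · rw [Finset.union_inter_distrib_right, h2.2, Finset.inter_comm ρ σ, h]; simp

theorem delV_linkC_aux {V : Type*} [DecidableEq V] (K : Set (Finset V))
    (σ : Finset V) (v : V) (h : v ∉ σ) :
    delV (linkC K σ) v = linkC (delV K v) σ := by
  ext τ
  simp only [linkC, delV, Set.mem_ofPred_eq, Finset.mem_union]
  tauto

theorem isComplex_linkC_aux {V : Type*} [DecidableEq V] (K : Set (Finset V)) (hK : IsComplex K)
    (σ : Finset V) (hσ : σ ∈ K) : IsComplex (linkC K σ) := by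
  refine ⟨⟨hK.1, by simp, by simpa using hσ⟩, ?_⟩
  rintro τ ⟨h1, h2, h3⟩ ρ hρ
  refine ⟨hK.2 _ h1 _ hρ, ?_, hK.2 _ h3 _ (Finset.union_subset_union_left hρ)⟩
  exact Finset.subset_empty.1 (h2 ▸ Finset.inter_subset_inter_right hρ)

theorem pureD_linkC_aux {V : Type*} [DecidableEq V] (K : Set (Finset V)) (hK : IsComplex K)
    (d : ℕ) (hp : PureD K d) (σ : Finset V) : PureD (linkC K σ) (d - σ.card) := by
  rintro τ ⟨⟨h1, h2, h3⟩, hmax⟩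
  have hd : Disjoint τ σ := Finset.disjoint_iff_inter_eq_empty.2 h2
  have hf : IsFacet K (τ ∪ σ) := by
    refine ⟨h3, fun ρ hρ hsub => ?_⟩
    have hσρ : σ ⊆ ρ := Finset.subset_union_right.trans hsub
    have hτρ : τ ⊆ ρ := Finset.subset_union_left.trans hsub
    have h := hmax (ρ \ σ) ⟨hK.2 _ hρ _ Finset.sdiff_subset, by simp, by
      rwa [Finset.sdiff_union_of_subset hσρ]⟩ (Finset.subset_sdiff.2 ⟨hτρ, hd⟩)
    rw [h, Finset.sdiff_union_of_subset hσρ]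
  have := hp _ hf
  rw [Finset.card_union_of_disjoint hd] at this
  omega

theorem vd_linkC_aux {V : Type*} [DecidableEq V] (d : ℕ) (K : Set (Finset V)) (h : VD d K) :
    ∀ σ ∈ K, VD (d - σ.card) (linkC K σ) := by
  induction h with
  | simplex d K h =>
    intro σ hσ
    obtain ⟨S, hS, rfl⟩ := h
    refine VD.simplex _ _ ⟨S \ σ, ?_, ?_⟩
    · rw [Finset.card_sdiff_of_subset hσ, hS]
    · ext τ
      have hσ' : σ ⊆ S := hσ
      simp only [linkC, Set.mem_ofPred_eq, Finset.subset_sdiff,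
        Finset.disjoint_iff_inter_eq_empty, Finset.union_subset_iff]
      tauto
  | shed d K w hK hp hw hdel hlink ih1 ih2 =>
    intro σ hσ
    by_cases hwσ : w ∈ σ
    · have hu : σ.erase w ∪ {w} = σ := by
        ext x; simp only [Finset.mem_union, Finset.mem_erase, Finset.mem_singleton]
        by_cases hx : x = w <;> simp [hx, hwσ]
      have hm : σ.erase w ∈ linkC K {w} :=
        ⟨hK.2 _ hσ _ (Finset.erase_subset _ _), by simp, by rwa [hu]⟩
      have := ih2 _ hm
      rw [linkC_comm_aux K hK _ _ (by simp), hu, Finset.card_erase_of_mem hwσ] at this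
      have hc : 0 < σ.card := Finset.card_pos.2 ⟨w, hwσ⟩
      have he : d - 1 - (σ.card - 1) = d - σ.card := by omega
      rwa [he] at this
    · have hmd : σ ∈ delV K w := ⟨hσ, hwσ⟩
      by_cases hσw : σ ∪ {w} ∈ K
      · refine VD.shed _ _ w (isComplex_linkC_aux K hK σ hσ) (pureD_linkC_aux K hK d hp σ)
          ⟨hw, by simp [hwσ], by rwa [Finset.union_comm]⟩ ?_ ?_
        · rw [delV_linkC_aux _ _ _ hwσ]; exact ih1 _ hmd
        · have := ih2 σ ⟨hσ, by simp [hwσ], hσw⟩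
          rw [linkC_comm_aux K hK _ _ (by simp [hwσ]), Finset.union_comm,
            ← linkC_comm_aux K hK _ _ (by simp [hwσ]), Nat.sub_right_comm]
          exact this
      · have he : linkC K σ = linkC (delV K w) σ := by
          rw [← delV_linkC_aux _ _ _ hwσ]
          ext τ
          refine ⟨fun hτ => ⟨hτ, fun hwτ => hσw (hK.2 _ hτ.2.2 _ ?_)⟩, fun hτ => hτ.1⟩
          intro x
          simp only [Finset.mem_union, Finset.mem_singleton]
          rintro (hx | rfl)
          · exact Or.inr hx
          · exact Or.inl hwτ
        rw [he]; exact ih1 _ hmd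

/-- If `v` is a shedding vertex of the pure `(d-1)`-dimensional
vertex-decomposable complex `Σ` and `σ ∈ Σ` is a nonempty face with `v ∉ σ`
and `σ ∪ {v} ∈ Σ`, then `v` is a shedding vertex of `lk(σ,Σ)`: the deletion
`lk(σ,Σ) \ {v}` is vertex-decomposable of the same dimension as `lk(σ,Σ)`,
and `lk({v}, lk(σ,Σ))` is vertex-decomposable of dimension one less. -/
theorem shedding_vertex_of_link {V : Type*} [DecidableEq V]
    (K : Set (Finset V)) (hK : IsComplex K) (d : ℕ) (hp : PureD K d)
    (hvd : VD d K) (v : V) (hv : ({v} : Finset V) ∈ K)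
    (hdel : VD d (delV K v)) (hlink : VD (d - 1) (linkC K {v}))
    (σ : Finset V) (hσ : σ ∈ K) (hne : σ.Nonempty) (hvσ : v ∉ σ)
    (hσv : σ ∪ {v} ∈ K) :
    ({v} : Finset V) ∈ linkC K σ ∧
    VD (d - σ.card) (delV (linkC K σ) v) ∧
    VD (d - σ.card - 1) (linkC (linkC K σ) {v}) := by
  refine ⟨⟨hv, by simp [hvσ], by rwa [Finset.union_comm]⟩, ?_, ?_⟩
  · rw [delV_linkC_aux _ _ _ hvσ]
    exact vd_linkC_aux _ _ hdel _ ⟨hσ, hvσ⟩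
  · have := vd_linkC_aux _ _ hlink σ ⟨hσ, by simp [hvσ], hσv⟩
    rw [linkC_comm_aux K hK _ _ (by simp [hvσ]), Finset.union_comm,
      ← linkC_comm_aux K hK _ _ (by simp [hvσ]), Nat.sub_right_comm]
    exact this
end
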